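/- Let 1/3 < λ < 1, let b, σ ∈ C_b^∞(ℝ;ℝ) with inf σ > 0, and for g ∈ C^λ₀([0,1];ℝ) and ξ ∈ ℝ let x_·(ξ,g) be the Doss–Sussmann solution. Let ℓ : [0,1] → ℝ be ℓ_t = t. Then there exist constants C₁, C₂ > 0, depending only on b and σ (not on g, ξ, t), such that for every g ∈ C^λ₀([0,1];ℝ), ξ ∈ ℝ, κ ∈ ℝ and t ∈ [0,1], the derivative (d/dκ) x_t(ξ, g + κℓ) exists and satisfies C₁·t ≤ (d/dκ) x_t(ξ, g + κℓ) ≤ C₂·t. In particular, for each t ∈ (0,1] the map κ ↦ x_t(ξ, g + κℓ) is a bijection from ℝ onto ℝ. -/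

import Mathlib

/-- `f` is in `C_b^∞(ℝ;ℝ)`. -/
def CbInf (f : ℝ → ℝ) : Prop :=
  ContDiff ℝ (⊤ : ℕ∞) f ∧ ∀ i : ℕ, ∃ M : ℝ, ∀ x : ℝ, |iteratedDeriv i f x| ≤ M

/-- `f_{σ,b}(x,y) = exp(−∫₀^y σ'(φ(x,η))dη) · b(φ(x,y))`. -/
noncomputable def fsb (b σ : ℝ → ℝ) (φ : ℝ → ℝ → ℝ) (x y : ℝ) : ℝ :=
  Real.exp (-(∫ η in (0:ℝ)..y, deriv σ (φ x η))) * b (φ x y)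

/-!
Since `σ > 0`, the Lamperti transform `Λ x = ∫₀ˣ 1/σ` straightens the flow of `σ`:
`φ α β = φ 0 (Λ α + β)`. Along the flow the exponential weight in `fsb` equals
`σ α / σ (φ α β)`, so `y = Λ a + g` satisfies the equation with additive noise
`dy = h(y) dt + dg`, where `h = (b / σ) ∘ φ 0`, and `x = φ 0 y`. The derivative of `h` is the Lie
bracket `σ b' - b σ'` divided by `σ`, evaluated along `φ 0`, hence bounded. Changing `κ` to `κ + ε`
in the driver `g + κ ℓ` perturbs `y` by the solution `d` of a scalar linear equation
`d' = q d + ε`, `d 0 = 0`, with `|q| ≤ L = sup |h'|`. By variation of constants `d t / ε` lies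
between `e^{-Lt} t` and `e^{Lt} t`, and it converges as `ε → 0`.
-/

open Set Filter Topology MeasureTheory intervalIntegral

/-! ### Primitives -/

section BoundedIntegrand

variable {E : Type*} [NormedAddCommGroup E]

lemma ordConnected_setOf_intervalIntegrable (f : ℝ → E) (a : ℝ) :
    OrdConnected {s | IntervalIntegrable f volume a s} := by
  refine ⟨fun x hx y hy z hz => ?_⟩
  rcases le_total a z with haz | hza
  · refine IntervalIntegrable.mono_set hy (uIcc_subset_uIcc_left ?_)
    exact mem_uIcc_of_le haz hz.2
  · refine IntervalIntegrable.mono_set hx (uIcc_subset_uIcc_left ?_)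
    exact mem_uIcc_of_ge hz.1 hza

variable [NormedSpace ℝ E]

lemma continuousOn_integral_of_norm_le {f : ℝ → E} {M : ℝ} (hM : ∀ x, ‖f x‖ ≤ M) (a : ℝ) :
    ContinuousOn (fun s => ∫ x in a..s, f x) {s | IntervalIntegrable f volume a s} := by
  refine (LipschitzOnWith.of_dist_le' (K := M) fun x hx y hy => ?_).continuousOn
  rw [dist_eq_norm, integral_interval_sub_left hx hy, Real.dist_eq]
  exact norm_integral_le_of_norm_le_const fun z _ => hM z

lemma aestronglyMeasurable_integral_of_norm_le {f : ℝ → E} {M : ℝ} (hM : ∀ x, ‖f x‖ ≤ M)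
    (a : ℝ) : AEStronglyMeasurable (fun s => ∫ x in a..s, f x) volume := by
  set T : Set ℝ := {s | IntervalIntegrable f volume a s}
  have hT : MeasurableSet T := (ordConnected_setOf_intervalIntegrable f a).measurableSet
  suffices h : AEStronglyMeasurable (fun s => ∫ x in a..s, f x) (volume.restrict (T ∪ Tᶜ)) by
    rwa [union_compl_self, Measure.restrict_univ] at h
  refine aestronglyMeasurable_union_iff.2
    ⟨(continuousOn_integral_of_norm_le hM a).aestronglyMeasurable hT, ?_⟩
  -- Where the integrand is not integrable, the integral takes the junk value `0`.
  refine (aestronglyMeasurable_const (b := (0 : E))).congr ?_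
  filter_upwards [ae_restrict_mem hT.compl] with s hs
  exact (integral_undef hs).symm

lemma continuous_of_eq_add_integral {v : E → E} {u : ℝ → E} {u₀ : E} {a M : ℝ}
    (hv : Continuous v) (hM : ∀ x, ‖v x‖ ≤ M)
    (hu : ∀ s, u s = u₀ + ∫ r in a..s, v (u r)) : Continuous u := by
  have hu' : u = fun s => u₀ + ∫ r in a..s, v (u r) := funext hu
  have hmeas : AEStronglyMeasurable u volume := by
    rw [hu']
    exact aestronglyMeasurable_const.add
      (aestronglyMeasurable_integral_of_norm_le (fun r => hM (u r)) a)
  have hint : ∀ r s, IntervalIntegrable (fun r => v (u r)) volume r s := fun r s =>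
    (intervalIntegrable_const (c := M)).mono_fun
      (hv.comp_aestronglyMeasurable hmeas).restrict
      (Eventually.of_forall fun x => (hM (u x)).trans (le_abs_self M))
  rw [hu']
  exact continuous_const.add (continuous_primitive hint a)

end BoundedIntegrand

section ContinuousOnIntegrand

variable {E : Type*} [NormedAddCommGroup E] [NormedSpace ℝ E] [CompleteSpace E]
  {f : ℝ → E} {a b t : ℝ}

lemma hasDerivAt_integral_right_of_continuousOn (hf : ContinuousOn f (Icc a b))
    (ht : t ∈ Ioo a b) : HasDerivAt (fun s => ∫ x in a..s, f x) (f t) t :=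
  integral_hasDerivAt_right
    ((hf.mono (Icc_subset_Icc_right ht.2.le)).intervalIntegrable_of_Icc ht.1.le)
    ((hf.mono Ioo_subset_Icc_self).stronglyMeasurableAtFilter isOpen_Ioo t ht)
    (hf.continuousAt (Icc_mem_nhds ht.1 ht.2))

lemma hasDerivAt_integral_left_of_continuousOn (hf : ContinuousOn f (Icc a b))
    (ht : t ∈ Ioo a b) : HasDerivAt (fun s => ∫ x in s..b, f x) (-f t) t :=
  integral_hasDerivAt_left
    ((hf.mono (Icc_subset_Icc_left ht.1.le)).intervalIntegrable_of_Icc ht.2.le)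
    ((hf.mono Ioo_subset_Icc_self).stronglyMeasurableAtFilter isOpen_Ioo t ht)
    (hf.continuousAt (Icc_mem_nhds ht.1 ht.2))

lemma hasDerivAt_of_eq_add_integral {x : ℝ → E} {x₀ : E} (hf : ContinuousOn f (Icc a b))
    (hx : ∀ s ∈ Icc a b, x s = x₀ + ∫ r in a..s, f r) (ht : t ∈ Ioo a b) :
    HasDerivAt x (f t) t := by
  refine ((hasDerivAt_integral_right_of_continuousOn hf ht).const_add x₀).congr_of_eventuallyEq ?_
  filter_upwards [Icc_mem_nhds ht.1 ht.2] with s hs using hx s hs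

end ContinuousOnIntegrand

lemma continuousOn_of_dist_le_mul_rpow {X Y : Type*} [PseudoMetricSpace X] [PseudoMetricSpace Y]
    {f : X → Y} {s : Set X} {C r : ℝ} (hr : 0 < r)
    (hf : ∀ x ∈ s, ∀ y ∈ s, dist (f y) (f x) ≤ C * dist y x ^ r) : ContinuousOn f s := by
  intro x hx
  rw [ContinuousWithinAt, tendsto_iff_dist_tendsto_zero]
  have hlim : Tendsto (fun y => C * dist y x ^ r) (𝓝[s] x) (𝓝 0) := by
    have hcont : Continuous fun y => C * dist y x ^ r :=
      continuous_const.mul ((continuous_id.dist continuous_const).rpow_const fun _ => .inr hr.le)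
    simpa [Real.zero_rpow hr.ne'] using (hcont.tendsto x).mono_left nhdsWithin_le_nhds
  refine squeeze_zero' (Eventually.of_forall fun _ => dist_nonneg) ?_ hlim
  filter_upwards [self_mem_nhdsWithin] with y hy using hf x hx y hy

lemma bijective_of_le_deriv {f : ℝ → ℝ} {c : ℝ} (hf : Differentiable ℝ f) (hc : 0 < c)
    (hcf : ∀ x, c ≤ deriv f x) : Function.Bijective f := by
  have hmono : StrictMono f := strictMono_of_deriv_pos fun x => hc.trans_le (hcf x)
  refine ⟨hmono.injective, hf.continuous.surjective ?_ ?_⟩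
  · refine tendsto_atTop_mono' _ ?_
      (tendsto_atTop_add_const_left _ (f 0) (tendsto_id.const_mul_atTop hc))
    filter_upwards [eventually_ge_atTop 0] with x hx
    simpa [le_sub_iff_add_le'] using mul_sub_le_image_sub_of_le_deriv hf hcf hx
  · refine tendsto_atBot_mono' _ ?_
      (tendsto_atBot_add_const_left _ (f 0) (tendsto_id.const_mul_atBot hc))
    filter_upwards [eventually_le_atBot 0] with x hx
    have := mul_sub_le_image_sub_of_le_deriv hf hcf hx
    simp only [id]
    linarith

/-! ### Scalar linear equations -/

lemma continuousOn_exp_integral_left {q : ℝ → ℝ} {a t : ℝ} (hat : a ≤ t)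
    (hq : ContinuousOn q (Icc a t)) :
    ContinuousOn (fun s => Real.exp (∫ u in s..t, q u)) (Icc a t) := by
  rw [← uIcc_of_le hat] at hq ⊢
  exact (continuousOn_primitive_interval_left (hq.integrableOn_compact isCompact_uIcc)).rexp

lemma eq_exp_integral_mul_add_integral {q p d : ℝ → ℝ} {a t : ℝ} (hat : a ≤ t)
    (hq : ContinuousOn q (Icc a t)) (hp : ContinuousOn p (Icc a t))
    (hd : ContinuousOn d (Icc a t))
    (hd' : ∀ s ∈ Ioo a t, HasDerivAt d (q s * d s + p s) s) :
    d t = Real.exp (∫ u in a..t, q u) * d a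
      + ∫ s in a..t, Real.exp (∫ u in s..t, q u) * p s := by
  set e : ℝ → ℝ := fun s => Real.exp (∫ u in s..t, q u)
  have he : ContinuousOn e (Icc a t) := continuousOn_exp_integral_left hat hq
  have hed : ∀ s ∈ Ioo a t, HasDerivAt (fun s => e s * d s) (e s * p s) s := fun s hs => by
    have he' : HasDerivAt e (e s * -q s) s :=
      (hasDerivAt_integral_left_of_continuousOn hq hs).exp
    exact (he'.mul (hd' s hs)).congr_deriv (by ring)
  have hFTC := integral_eq_sub_of_hasDerivAt_of_le hat (he.mul hd) hed
    ((he.mul hp).intervalIntegrable_of_Icc hat)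
  have het : e t = 1 := by simp [e]
  rw [hFTC, Pi.mul_apply, Pi.mul_apply, het]
  ring

/-- The solution of the scalar linear equation `d' = q d + 1`, `d 0 = 0`, as given by variation of
constants; the response of a linear equation to a unit drift. -/
noncomputable def linearResponse (q : ℝ → ℝ) (t : ℝ) : ℝ :=
  ∫ s in (0 : ℝ)..t, Real.exp (∫ u in s..t, q u)

section LinearResponse

variable {q : ℝ → ℝ} {L t : ℝ}

lemma abs_integral_le_mul_of_mem_Icc (hL : ∀ u ∈ Icc 0 t, |q u| ≤ L) {s : ℝ}
    (hs : s ∈ Icc 0 t) : |∫ u in s..t, q u| ≤ L * t := by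
  have hL0 : 0 ≤ L := (abs_nonneg _).trans (hL s hs)
  calc |∫ u in s..t, q u| ≤ L * |t - s| :=
        norm_integral_le_of_norm_le_const (f := q) fun u hu => hL u
          (Icc_subset_Icc_left hs.1 (Ioc_subset_Icc_self (uIoc_of_le hs.2 ▸ hu)))
    _ ≤ L * t := by
        rw [abs_of_nonneg (sub_nonneg.2 hs.2)]
        exact mul_le_mul_of_nonneg_left (sub_le_self t hs.1) hL0

lemma linearResponse_mem_Icc (ht : 0 ≤ t) (hq : ContinuousOn q (Icc 0 t))
    (hL : ∀ u ∈ Icc 0 t, |q u| ≤ L) :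
    linearResponse q t ∈ Icc (Real.exp (-(L * t)) * t) (Real.exp (L * t) * t) := by
  have hint : IntervalIntegrable (fun s => Real.exp (∫ u in s..t, q u)) volume 0 t :=
    (continuousOn_exp_integral_left ht hq).intervalIntegrable_of_Icc ht
  have hbound : ∀ s ∈ Icc 0 t, -(L * t) ≤ (∫ u in s..t, q u) ∧ (∫ u in s..t, q u) ≤ L * t :=
    fun s hs => abs_le.1 (abs_integral_le_mul_of_mem_Icc hL hs)
  constructor
  · simpa [linearResponse, mul_comm] using integral_mono_on ht intervalIntegrable_const hint
      fun s hs => Real.exp_le_exp.2 (hbound s hs).1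
  · simpa [linearResponse, mul_comm] using integral_mono_on ht hint intervalIntegrable_const
      fun s hs => Real.exp_le_exp.2 (hbound s hs).2

lemma tendsto_linearResponse {ι : Type*} {l : Filter ι} [l.IsCountablyGenerated]
    {q : ι → ℝ → ℝ} {q₀ : ℝ → ℝ} (ht : 0 ≤ t) (hq : ∀ i, ContinuousOn (q i) (Icc 0 t))
    (hL : ∀ i, ∀ u ∈ Icc 0 t, |q i u| ≤ L)
    (hlim : ∀ u ∈ Icc 0 t, Tendsto (fun i => q i u) l (𝓝 (q₀ u))) :
    Tendsto (fun i => linearResponse (q i) t) l (𝓝 (linearResponse q₀ t)) := by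
  have hexponent : ∀ s ∈ Icc 0 t,
      Tendsto (fun i => ∫ u in s..t, q i u) l (𝓝 (∫ u in s..t, q₀ u)) := fun s hs => by
    have hsub : uIoc s t ⊆ Icc 0 t := by
      rw [uIoc_of_le hs.2]
      exact Ioc_subset_Icc_self.trans (Icc_subset_Icc_left hs.1)
    exact tendsto_integral_filter_of_dominated_convergence (fun _ => L)
      (Eventually.of_forall fun i => ((hq i).mono hsub).aestronglyMeasurable measurableSet_uIoc)
      (Eventually.of_forall fun i => Eventually.of_forall fun u hu => hL i u (hsub hu))
      intervalIntegrable_const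
      (Eventually.of_forall fun u hu => hlim u (hsub hu))
  have hsub : uIoc 0 t ⊆ Icc 0 t := by
    rw [uIoc_of_le ht]
    exact Ioc_subset_Icc_self
  refine tendsto_integral_filter_of_dominated_convergence (fun _ => Real.exp (L * t))
    (Eventually.of_forall fun i => ((continuousOn_exp_integral_left ht (hq i)).mono
      hsub).aestronglyMeasurable measurableSet_uIoc)
    (Eventually.of_forall fun i => Eventually.of_forall fun s hs => ?_)
    intervalIntegrable_const
    (Eventually.of_forall fun s hs => (hexponent s (hsub hs)).rexp)
  rw [Real.norm_eq_abs, Real.abs_exp, Real.exp_le_exp]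
  exact (le_abs_self _).trans (abs_integral_le_mul_of_mem_Icc (hL i) (hsub hs))

end LinearResponse

/-- The mean of the derivative of `f` over the segment from `x` to `y`. It is the difference
quotient of `f`, in a form whose joint continuity, also on the diagonal, is evident. -/
noncomputable def meanDeriv (f : ℝ → ℝ) (x y : ℝ) : ℝ :=
  ∫ θ in (0 : ℝ)..1, deriv f (x + θ * (y - x))

section MeanDeriv

variable {f : ℝ → ℝ}

lemma continuous_meanDeriv (hf : ContDiff ℝ 1 f) :
    Continuous fun p : ℝ × ℝ => meanDeriv f p.1 p.2 := by
  have := hf.continuous_deriv le_rfl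
  exact continuous_parametric_intervalIntegral_of_continuous' (by fun_prop) 0 1

lemma meanDeriv_self (f : ℝ → ℝ) (x : ℝ) : meanDeriv f x x = deriv f x := by
  simp [meanDeriv]

lemma abs_meanDeriv_le {L : ℝ} (hL : ∀ x, |deriv f x| ≤ L) (x y : ℝ) : |meanDeriv f x y| ≤ L := by
  simpa [meanDeriv] using norm_integral_le_of_norm_le_const (a := (0 : ℝ)) (b := 1)
    (f := fun θ => deriv f (x + θ * (y - x))) fun θ _ => hL (x + θ * (y - x))

lemma meanDeriv_mul_sub (hf : ContDiff ℝ 1 f) (x y : ℝ) :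
    meanDeriv f x y * (y - x) = f y - f x := by
  calc meanDeriv f x y * (y - x)
      = (y - x) * ∫ θ in (0 : ℝ)..1, deriv f (x + (y - x) * θ) := by
        simp only [meanDeriv, mul_comm]
    _ = ∫ z in x..y, deriv f z := by simp [mul_integral_comp_add_mul]
    _ = f y - f x := integral_deriv_eq_sub (fun z _ => hf.differentiable one_ne_zero z)
        ((hf.continuous_deriv le_rfl).intervalIntegrable x y)

end MeanDeriv

/-! ### Scalar equations with additive noise -/

/-- `y` solves `dy = h(y) dt + dg` on `[0, T]` with `y₀ - g₀ = z`. As `g` need not be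
differentiable, the equation is read as an ordinary differential equation for `y - g`. -/
structure IsAdditiveSolution (h g : ℝ → ℝ) (z T : ℝ) (y : ℝ → ℝ) : Prop where
  continuousOn : ContinuousOn y (Icc 0 T)
  zero_sub : y 0 - g 0 = z
  hasDerivAt : ∀ t ∈ Ioo 0 T, HasDerivAt (fun s => y s - g s) (h (y t)) t

namespace IsAdditiveSolution

variable {h g : ℝ → ℝ} {z T L : ℝ} {y : ℝ → ℝ → ℝ}

lemma continuousOn_meanDeriv (hh : ContDiff ℝ 1 h)
    (hy : ∀ κ, IsAdditiveSolution h (fun s => g s + κ * s) z T (y κ)) (κ κ' : ℝ) {t : ℝ}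
    (ht : t ≤ T) : ContinuousOn (fun u => meanDeriv h (y κ u) (y κ' u)) (Icc 0 t) :=
  ((continuous_meanDeriv hh).comp_continuousOn
    ((hy κ).continuousOn.prodMk (hy κ').continuousOn)).mono (Icc_subset_Icc_right ht)

lemma sub_eq_mul_linearResponse (hh : ContDiff ℝ 1 h)
    (hy : ∀ κ, IsAdditiveSolution h (fun s => g s + κ * s) z T (y κ)) (κ κ' : ℝ) {t : ℝ}
    (ht : t ∈ Icc 0 T) :
    y κ' t - y κ t = (κ' - κ) * linearResponse (fun u => meanDeriv h (y κ u) (y κ' u)) t := by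
  have hcont : ∀ κ, ContinuousOn (y κ) (Icc 0 t) := fun κ =>
    (hy κ).continuousOn.mono (Icc_subset_Icc_right ht.2)
  have hderiv : ∀ s ∈ Ioo 0 t, HasDerivAt (fun s => y κ' s - y κ s)
      (meanDeriv h (y κ s) (y κ' s) * (y κ' s - y κ s) + (κ' - κ)) s := fun s hs => by
    have hs' := Ioo_subset_Ioo_right ht.2 hs
    rw [meanDeriv_mul_sub hh]
    refine ((((hy κ').hasDerivAt s hs').sub ((hy κ).hasDerivAt s hs')).add
      ((hasDerivAt_id s).const_mul (κ' - κ))).congr_of_eventuallyEq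
        (Eventually.of_forall fun r => ?_) |>.congr_deriv (by rw [mul_one])
    simp only [Pi.add_apply, Pi.sub_apply, id]
    ring
  have hinit : y κ' 0 - y κ 0 = 0 := by
    have := (hy κ').zero_sub.trans (hy κ).zero_sub.symm
    linarith
  have := eq_exp_integral_mul_add_integral ht.1 (continuousOn_meanDeriv hh hy κ κ' ht.2)
    continuousOn_const ((hcont κ').fun_sub (hcont κ)) hderiv
  rwa [hinit, mul_zero, zero_add, intervalIntegral.integral_mul_const, mul_comm] at this

lemma continuous_param (hh : ContDiff ℝ 1 h) (hL : ∀ x, |deriv h x| ≤ L)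
    (hy : ∀ κ, IsAdditiveSolution h (fun s => g s + κ * s) z T (y κ)) {t : ℝ}
    (ht : t ∈ Icc 0 T) : Continuous fun κ => y κ t := by
  refine (LipschitzWith.of_dist_le' (K := Real.exp (L * t) * t) fun κ' κ => ?_).continuous
  have hresponse := linearResponse_mem_Icc ht.1 (continuousOn_meanDeriv hh hy κ κ' ht.2)
    fun u _ => abs_meanDeriv_le hL _ _
  have hnonneg := (mul_nonneg (Real.exp_pos _).le ht.1).trans hresponse.1
  rw [Real.dist_eq, Real.dist_eq, sub_eq_mul_linearResponse hh hy κ κ' ht, abs_mul, mul_comm,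
    abs_of_nonneg hnonneg]
  exact mul_le_mul_of_nonneg_right hresponse.2 (abs_nonneg _)

lemma hasDerivAt_param (hh : ContDiff ℝ 1 h) (hL : ∀ x, |deriv h x| ≤ L)
    (hy : ∀ κ, IsAdditiveSolution h (fun s => g s + κ * s) z T (y κ)) (κ : ℝ) {t : ℝ}
    (ht : t ∈ Icc 0 T) :
    HasDerivAt (fun κ => y κ t) (linearResponse (fun u => deriv h (y κ u)) t) κ := by
  rw [hasDerivAt_iff_tendsto_slope]
  have hslope : ∀ u ∈ Icc 0 t,
      Tendsto (fun κ' => meanDeriv h (y κ u) (y κ' u)) (𝓝[≠] κ) (𝓝 (deriv h (y κ u))) :=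
    fun u hu => by
      have hcont : Continuous fun κ' => meanDeriv h (y κ u) (y κ' u) :=
        (continuous_meanDeriv hh).comp
          (continuous_const.prodMk (continuous_param hh hL hy ⟨hu.1, hu.2.trans ht.2⟩))
      simpa only [meanDeriv_self] using (hcont.tendsto κ).mono_left nhdsWithin_le_nhds
  refine (tendsto_linearResponse ht.1 (fun κ' => continuousOn_meanDeriv hh hy κ κ' ht.2)
    (fun κ' u _ => abs_meanDeriv_le hL _ _) hslope).congr' ?_
  filter_upwards [self_mem_nhdsWithin] with κ' hκ'
  rw [slope_def_field, sub_eq_mul_linearResponse hh hy κ κ' ht,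
    mul_div_cancel_left₀ _ (sub_ne_zero.2 hκ')]

end IsAdditiveSolution

/-! ### The Lamperti transform -/

/-- The Lamperti transform `∫₀ˣ 1/σ`, the coordinate in which the flow of `σ > 0` is translation. -/
noncomputable def lamperti (σ : ℝ → ℝ) (x : ℝ) : ℝ :=
  ∫ s in (0 : ℝ)..x, (σ s)⁻¹

section Lamperti

variable {σ : ℝ → ℝ}

lemma hasDerivAt_lamperti (hσ : Continuous σ) (hpos : ∀ x, 0 < σ x) (x : ℝ) :
    HasDerivAt (lamperti σ) (σ x)⁻¹ x :=
  ((hσ.inv₀ fun y => (hpos y).ne').integral_hasStrictDerivAt 0 x).hasDerivAt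

lemma continuous_lamperti (hσ : Continuous σ) (hpos : ∀ x, 0 < σ x) : Continuous (lamperti σ) :=
  continuous_iff_continuousAt.2 fun x => (hasDerivAt_lamperti hσ hpos x).continuousAt

lemma lamperti_injective (hσ : Continuous σ) (hpos : ∀ x, 0 < σ x) :
    Function.Injective (lamperti σ) := by
  refine (strictMono_of_deriv_pos fun x => ?_).injective
  rw [(hasDerivAt_lamperti hσ hpos x).deriv]
  exact inv_pos.2 (hpos x)

end Lamperti

/-- `φ` is a global flow of the vector field `σ` on the line; `φ α β` is the position at time `β` of
the integral curve started at `α`. -/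
structure IsFlow (σ : ℝ → ℝ) (φ : ℝ → ℝ → ℝ) : Prop where
  map_zero : ∀ α, φ α 0 = α
  hasDerivAt : ∀ α β, HasDerivAt (φ α) (σ (φ α β)) β

/-- The drift `b` in the Lamperti coordinate: `b / σ` along the integral curve `φ 0`, which is the
inverse of `lamperti σ`. -/
noncomputable def lampertiDrift (b σ : ℝ → ℝ) (φ : ℝ → ℝ → ℝ) (y : ℝ) : ℝ :=
  b (φ 0 y) / σ (φ 0 y)

/-- `a` is the Doss–Sussmann auxiliary path on `[0, T]` for initial value `ξ` and driver `g`; the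
Doss–Sussmann solution is then `t ↦ φ (a t) (g t)`. -/
def IsAuxiliaryPath (b σ : ℝ → ℝ) (φ : ℝ → ℝ → ℝ) (ξ T : ℝ) (g a : ℝ → ℝ) : Prop :=
  ContinuousOn a (Icc 0 T) ∧
    ∀ t ∈ Icc 0 T, a t = ξ + ∫ u in (0 : ℝ)..t, fsb b σ φ (a u) (g u)

namespace IsFlow

variable {b σ : ℝ → ℝ} {φ : ℝ → ℝ → ℝ}

lemma of_integral_eq {M : ℝ} (hσ : Continuous σ) (hM : ∀ x, |σ x| ≤ M)
    (hφ : ∀ α β, φ α β = α + ∫ η in (0 : ℝ)..β, σ (φ α η)) : IsFlow σ φ where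
  map_zero α := by simpa using hφ α 0
  hasDerivAt α β := by
    have hcont : Continuous (φ α) := continuous_of_eq_add_integral hσ hM (hφ α)
    exact (((hσ.comp hcont).integral_hasStrictDerivAt 0 β).hasDerivAt.const_add α)
      |>.congr_of_eventuallyEq (Eventually.of_forall (hφ α))

lemma continuous (hφ : IsFlow σ φ) (α : ℝ) : Continuous (φ α) :=
  continuous_iff_continuousAt.2 fun β => (hφ.hasDerivAt α β).continuousAt

lemma contDiff_one (hφ : IsFlow σ φ) (hσ : Continuous σ) (α : ℝ) : ContDiff ℝ 1 (φ α) := by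
  refine contDiff_one_iff_deriv.2 ⟨fun β => (hφ.hasDerivAt α β).differentiableAt, ?_⟩
  rw [show deriv (φ α) = fun β => σ (φ α β) from funext fun β => (hφ.hasDerivAt α β).deriv]
  exact hσ.comp (hφ.continuous α)

lemma lamperti_apply (hφ : IsFlow σ φ) (hσ : Continuous σ) (hpos : ∀ x, 0 < σ x) (α β : ℝ) :
    lamperti σ (φ α β) = lamperti σ α + β := by
  have hderiv : ∀ β, HasDerivAt (fun β => lamperti σ (φ α β) - β) 0 β := fun β => by
    have := ((hasDerivAt_lamperti hσ hpos (φ α β)).comp β (hφ.hasDerivAt α β)).sub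
      (hasDerivAt_id β)
    rwa [inv_mul_cancel₀ (hpos _).ne', sub_self] at this
  have := is_const_of_deriv_eq_zero (fun β => (hderiv β).differentiableAt)
    (fun β => (hderiv β).deriv) β 0
  rw [hφ.map_zero, sub_zero] at this
  linarith

lemma apply_eq_apply_zero (hφ : IsFlow σ φ) (hσ : Continuous σ) (hpos : ∀ x, 0 < σ x)
    (α β : ℝ) : φ α β = φ 0 (lamperti σ α + β) := by
  apply lamperti_injective hσ hpos
  rw [hφ.lamperti_apply hσ hpos, hφ.lamperti_apply hσ hpos]
  simp [lamperti]

lemma exp_neg_integral_deriv (hφ : IsFlow σ φ) (hσ : ContDiff ℝ 1 σ) (hpos : ∀ x, 0 < σ x)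
    (α β : ℝ) : Real.exp (-∫ η in (0 : ℝ)..β, deriv σ (φ α η)) = σ α / σ (φ α β) := by
  have hlog : ∀ β, HasDerivAt (fun β => Real.log (σ (φ α β))) (deriv σ (φ α β)) β := fun β => by
    have := ((hσ.differentiable one_ne_zero (φ α β)).hasDerivAt.comp β
      (hφ.hasDerivAt α β)).log (hpos _).ne'
    simpa [Function.comp_def, (hpos (φ α β)).ne'] using this
  rw [integral_eq_sub_of_hasDerivAt (fun β _ => hlog β)
      (((hσ.continuous_deriv le_rfl).comp (hφ.continuous α)).intervalIntegrable _ _),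
    neg_sub, Real.exp_sub, Real.exp_log (hpos _), Real.exp_log (hpos _), hφ.map_zero]

lemma fsb_eq (hφ : IsFlow σ φ) (hσ : ContDiff ℝ 1 σ) (hpos : ∀ x, 0 < σ x) (x y : ℝ) :
    fsb b σ φ x y = σ x * lampertiDrift b σ φ (lamperti σ x + y) := by
  rw [fsb, hφ.exp_neg_integral_deriv hσ hpos, lampertiDrift,
    ← hφ.apply_eq_apply_zero hσ.continuous hpos]
  ring

lemma contDiff_lampertiDrift (hφ : IsFlow σ φ) (hb : ContDiff ℝ 1 b) (hσ : ContDiff ℝ 1 σ)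
    (hpos : ∀ x, 0 < σ x) : ContDiff ℝ 1 (lampertiDrift b σ φ) :=
  have hφ₀ := hφ.contDiff_one hσ.continuous 0
  (hb.comp hφ₀).div (hσ.comp hφ₀) fun y => (hpos (φ 0 y)).ne'

lemma deriv_lampertiDrift (hφ : IsFlow σ φ) (hb : Differentiable ℝ b) (hσ : Differentiable ℝ σ)
    (hpos : ∀ x, 0 < σ x) (y : ℝ) :
    deriv (lampertiDrift b σ φ) y =
      (σ (φ 0 y) * deriv b (φ 0 y) - b (φ 0 y) * deriv σ (φ 0 y)) / σ (φ 0 y) := by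
  have hne : σ (φ 0 y) ≠ 0 := (hpos _).ne'
  have hφ' := hφ.hasDerivAt 0 y
  have := ((hb (φ 0 y)).hasDerivAt.comp y hφ').div ((hσ (φ 0 y)).hasDerivAt.comp y hφ') hne
  refine (this.congr_deriv ?_).deriv
  simp only [Function.comp_apply]
  field_simp

lemma isAdditiveSolution (hφ : IsFlow σ φ) (hb : Continuous b) (hσ : ContDiff ℝ 1 σ)
    (hpos : ∀ x, 0 < σ x) {ξ T : ℝ} {g a : ℝ → ℝ} (hT : 0 ≤ T)
    (hg : ContinuousOn g (Icc 0 T)) (ha : IsAuxiliaryPath b σ φ ξ T g a) :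
    IsAdditiveSolution (lampertiDrift b σ φ) g (lamperti σ ξ) T
      (fun t => lamperti σ (a t) + g t) := by
  obtain ⟨ha, ha_eq⟩ := ha
  have hy : ContinuousOn (fun t => lamperti σ (a t) + g t) (Icc 0 T) :=
    ((continuous_lamperti hσ.continuous hpos).comp_continuousOn ha).add hg
  have hdrift : Continuous (lampertiDrift b σ φ) :=
    (hb.comp (hφ.continuous 0)).div (hσ.continuous.comp (hφ.continuous 0)) fun y => (hpos _).ne'
  simp only [hφ.fsb_eq hσ hpos] at ha_eq
  refine ⟨hy, ?_, fun t ht => ?_⟩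
  · simpa using congrArg (lamperti σ) (ha_eq 0 (left_mem_Icc.2 hT))
  · have ha' := hasDerivAt_of_eq_add_integral
      ((hσ.continuous.comp_continuousOn ha).mul (hdrift.comp_continuousOn hy)) ha_eq ht
    have hlamperti := (hasDerivAt_lamperti hσ.continuous hpos (a t)).comp t ha'
    refine (hlamperti.congr_deriv ?_).congr_of_eventuallyEq
      (Eventually.of_forall fun s => add_sub_cancel_right _ _)
    exact inv_mul_cancel_left₀ (hpos (a t)).ne' _

lemma hasDerivAt_dossSussmann (hφ : IsFlow σ φ) (hb : ContDiff ℝ 1 b) (hσ : ContDiff ℝ 1 σ)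
    (hpos : ∀ x, 0 < σ x) {L : ℝ} (hL : ∀ y, |deriv (lampertiDrift b σ φ) y| ≤ L) {ξ T : ℝ}
    {g : ℝ → ℝ} (hg : ContinuousOn g (Icc 0 T)) {a : ℝ → ℝ → ℝ}
    (ha : ∀ κ, IsAuxiliaryPath b σ φ ξ T (fun u => g u + κ * u) (a κ)) (κ : ℝ) {t : ℝ}
    (ht : t ∈ Icc 0 T) :
    HasDerivAt (fun κ => φ (a κ t) (g t + κ * t))
      (σ (φ (a κ t) (g t + κ * t)) * linearResponse
        (fun u => deriv (lampertiDrift b σ φ) (lamperti σ (a κ u) + (g u + κ * u))) t) κ := by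
  have hy : ∀ κ, IsAdditiveSolution (lampertiDrift b σ φ) (fun u => g u + κ * u) (lamperti σ ξ) T
      (fun u => lamperti σ (a κ u) + (g u + κ * u)) := fun κ =>
    hφ.isAdditiveSolution hb.continuous hσ hpos (ht.1.trans ht.2) (by fun_prop) (ha κ)
  simp only [hφ.apply_eq_apply_zero hσ.continuous hpos (a _ t)]
  exact (hφ.hasDerivAt 0 _).comp κ
    (IsAdditiveSolution.hasDerivAt_param (hφ.contDiff_lampertiDrift hb hσ hpos) hL hy κ ht)

lemma abs_deriv_lampertiDrift_le (hφ : IsFlow σ φ) (hb : Differentiable ℝ b)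
    (hσ : Differentiable ℝ σ) {c B : ℝ} (hc : 0 < c) (hcσ : ∀ x, c ≤ σ x)
    (hB : ∀ x, |σ x * deriv b x - b x * deriv σ x| ≤ B) (y : ℝ) :
    |deriv (lampertiDrift b σ φ) y| ≤ B / c := by
  have hpos : ∀ x, 0 < σ x := fun x => hc.trans_le (hcσ x)
  rw [hφ.deriv_lampertiDrift hb hσ hpos, abs_div, abs_of_pos (hpos _)]
  exact div_le_div₀ ((abs_nonneg _).trans (hB 0)) (hB _) hc (hcσ _)

lemma exists_hasDerivAt_dossSussmann (hφ : IsFlow σ φ) (hb : ContDiff ℝ 1 b)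
    (hσ : ContDiff ℝ 1 σ) {c M L : ℝ} (hc : 0 < c) (hcσ : ∀ x, c ≤ σ x) (hσM : ∀ x, σ x ≤ M)
    (hL : ∀ y, |deriv (lampertiDrift b σ φ) y| ≤ L) {ξ T : ℝ} {g : ℝ → ℝ}
    (hg : ContinuousOn g (Icc 0 T)) {a : ℝ → ℝ → ℝ}
    (ha : ∀ κ, IsAuxiliaryPath b σ φ ξ T (fun u => g u + κ * u) (a κ)) (κ : ℝ) {t : ℝ}
    (ht : t ∈ Icc 0 T) :
    ∃ D, HasDerivAt (fun κ => φ (a κ t) (g t + κ * t)) D κ ∧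
      c * Real.exp (-(L * T)) * t ≤ D ∧ D ≤ M * Real.exp (L * T) * t := by
  have hpos : ∀ x, 0 < σ x := fun x => hc.trans_le (hcσ x)
  have hLt : L * t ≤ L * T := mul_le_mul_of_nonneg_left ht.2 ((abs_nonneg _).trans (hL 0))
  have hq : ContinuousOn
      (fun u => deriv (lampertiDrift b σ φ) (lamperti σ (a κ u) + (g u + κ * u))) (Icc 0 t) := by
    have hy : ContinuousOn (fun u => lamperti σ (a κ u) + (g u + κ * u)) (Icc 0 T) :=
      ((continuous_lamperti hσ.continuous hpos).comp_continuousOn (ha κ).1).add (by fun_prop)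
    exact (((hφ.contDiff_lampertiDrift hb hσ hpos).continuous_deriv le_rfl).comp_continuousOn
      hy).mono (Icc_subset_Icc_right ht.2)
  obtain ⟨hlower, hupper⟩ := linearResponse_mem_Icc ht.1 hq fun u _ => hL _
  have hexp : 0 ≤ Real.exp (-(L * t)) * t := mul_nonneg (Real.exp_pos _).le ht.1
  refine ⟨_, hφ.hasDerivAt_dossSussmann hb hσ hpos hL hg ha κ ht, ?_, ?_⟩
  · calc c * Real.exp (-(L * T)) * t ≤ c * (Real.exp (-(L * t)) * t) := by
          rw [mul_assoc]
          gcongr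
          exact ht.1
      _ ≤ _ := mul_le_mul (hcσ _) hlower hexp (hpos _).le
  · calc _ ≤ M * (Real.exp (L * t) * t) :=
          mul_le_mul (hσM _) hupper (hexp.trans hlower) ((hpos 0).le.trans (hσM 0))
      _ ≤ M * Real.exp (L * T) * t := by
          rw [mul_assoc]
          gcongr
          · exact (hpos 0).le.trans (hσM 0)
          · exact ht.1

end IsFlow

namespace CbInf

variable {b σ : ℝ → ℝ}

lemma contDiff_one (hb : CbInf b) : ContDiff ℝ 1 b :=
  hb.1.of_le (by exact_mod_cast le_top)

lemma exists_abs_le (hb : CbInf b) : ∃ M, ∀ x, |b x| ≤ M := by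
  simpa using hb.2 0

lemma exists_abs_deriv_le (hb : CbInf b) : ∃ M, ∀ x, |deriv b x| ≤ M := by
  simpa using hb.2 1

lemma exists_abs_bracket_le (hb : CbInf b) (hσ : CbInf σ) :
    ∃ B, ∀ x, |σ x * deriv b x - b x * deriv σ x| ≤ B := by
  obtain ⟨Mb, hMb⟩ := hb.exists_abs_le
  obtain ⟨Mb', hMb'⟩ := hb.exists_abs_deriv_le
  obtain ⟨Mσ, hMσ⟩ := hσ.exists_abs_le
  obtain ⟨Mσ', hMσ'⟩ := hσ.exists_abs_deriv_le
  refine ⟨Mσ * Mb' + Mb * Mσ', fun x => (abs_sub _ _).trans ?_⟩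
  rw [abs_mul, abs_mul]
  gcongr
  · exact (abs_nonneg _).trans (hMσ x)
  · exact hMσ x
  · exact hMb' x
  · exact (abs_nonneg _).trans (hMb x)
  · exact hMb x
  · exact hMσ' x

end CbInf

theorem stmt14_general {b σ : ℝ → ℝ} (hb : ContDiff ℝ 1 b) (hσ : ContDiff ℝ 1 σ)
    (hσpos : ∃ c : ℝ, 0 < c ∧ ∀ x : ℝ, c ≤ σ x) (hσbdd : ∃ M : ℝ, ∀ x : ℝ, |σ x| ≤ M)
    (hbracket : ∃ B : ℝ, ∀ x : ℝ, |σ x * deriv b x - b x * deriv σ x| ≤ B)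
    {φ : ℝ → ℝ → ℝ} (hφ : ∀ α β : ℝ, φ α β = α + ∫ η in (0 : ℝ)..β, σ (φ α η)) {T : ℝ}
    {A : ℝ → (ℝ → ℝ) → ℝ → ℝ}
    (hA : ∀ (ξ : ℝ) (g : ℝ → ℝ), ContinuousOn g (Icc 0 T) → g 0 = 0 →
      IsAuxiliaryPath b σ φ ξ T g (A ξ g)) :
    ∃ C₁ : ℝ, 0 < C₁ ∧ ∃ C₂ : ℝ, 0 < C₂ ∧
      ∀ g : ℝ → ℝ, ContinuousOn g (Icc 0 T) → g 0 = 0 → ∀ ξ : ℝ,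
        (∀ κ : ℝ, ∀ t ∈ Icc 0 T, ∃ D : ℝ,
          HasDerivAt (fun κ' : ℝ => φ (A ξ (fun u => g u + κ' * u) t) (g t + κ' * t)) D κ ∧
          C₁ * t ≤ D ∧ D ≤ C₂ * t) ∧
        (∀ t : ℝ, 0 < t → t ≤ T →
          Function.Bijective
            (fun κ : ℝ => φ (A ξ (fun u => g u + κ * u) t) (g t + κ * t))) := by
  obtain ⟨c, hc, hcσ⟩ := hσpos
  obtain ⟨M, hM⟩ := hσbdd
  obtain ⟨B, hB⟩ := hbracket
  have hflow : IsFlow σ φ := .of_integral_eq hσ.continuous hM hφ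
  have hdrift := hflow.abs_deriv_lampertiDrift_le (hb.differentiable one_ne_zero)
    (hσ.differentiable one_ne_zero) hc hcσ hB
  have hσM : ∀ x, σ x ≤ M := fun x => (le_abs_self _).trans (hM x)
  have hMpos : 0 < M := hc.trans_le ((hcσ 0).trans (hσM 0))
  refine ⟨c * Real.exp (-(B / c * T)), by positivity, M * Real.exp (B / c * T), by positivity,
    fun g hg hg₀ ξ => ?_⟩
  have hpath : ∀ κ : ℝ, IsAuxiliaryPath b σ φ ξ T (fun u => g u + κ * u)
      (A ξ fun u => g u + κ * u) := fun κ => hA ξ _ (by fun_prop) (by simp [hg₀])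
  have hderiv := fun κ t (ht : t ∈ Icc 0 T) =>
    hflow.exists_hasDerivAt_dossSussmann hb hσ hc hcσ hσM hdrift hg hpath κ ht
  refine ⟨hderiv, fun t ht₀ htT => ?_⟩
  choose D hD hlower _ using fun κ => hderiv κ t ⟨ht₀.le, htT⟩
  exact bijective_of_le_deriv (fun κ => (hD κ).differentiableAt) (by positivity)
    fun κ => (hlower κ).trans_eq (hD κ).deriv.symm

theorem stmt14
    (lam : ℝ) (hlam1 : 1/3 < lam) (hlam2 : lam < 1)
    (b σ : ℝ → ℝ) (hb : CbInf b) (hσ : CbInf σ)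
    (hσpos : ∃ c : ℝ, 0 < c ∧ ∀ x : ℝ, c ≤ σ x)
    (φ : ℝ → ℝ → ℝ) (hφ : ∀ α β : ℝ, φ α β = α + ∫ η in (0:ℝ)..β, σ (φ α η))
    -- `A ξ g` is the Doss–Sussmann auxiliary path for initial value `ξ` and driver `g`,
    -- so that `x_t(ξ,g) = φ(A ξ g t, g t)`
    (A : ℝ → (ℝ → ℝ) → ℝ → ℝ)
    (hA : ∀ (ξ : ℝ) (g : ℝ → ℝ), ContinuousOn g (Set.Icc 0 1) → g 0 = 0 →
      ContinuousOn (A ξ g) (Set.Icc 0 1) ∧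
      ∀ t ∈ Set.Icc (0:ℝ) 1, A ξ g t = ξ + ∫ u in (0:ℝ)..t, fsb b σ φ (A ξ g u) (g u)) :
    ∃ C₁ : ℝ, 0 < C₁ ∧ ∃ C₂ : ℝ, 0 < C₂ ∧
      ∀ g : ℝ → ℝ,
        (∃ Cg : ℝ, ∀ s ∈ Set.Icc (0:ℝ) 1, ∀ t ∈ Set.Icc (0:ℝ) 1,
          |g t - g s| ≤ Cg * |t - s| ^ lam) → g 0 = 0 →
        ∀ ξ : ℝ,
          (∀ κ : ℝ, ∀ t ∈ Set.Icc (0:ℝ) 1, ∃ D : ℝ,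
            HasDerivAt
              (fun κ' : ℝ => φ (A ξ (fun u => g u + κ' * u) t) (g t + κ' * t)) D κ ∧
            C₁ * t ≤ D ∧ D ≤ C₂ * t) ∧
          (∀ t : ℝ, 0 < t → t ≤ 1 →
            Function.Bijective
              (fun κ : ℝ => φ (A ξ (fun u => g u + κ * u) t) (g t + κ * t))) := by
  obtain ⟨C₁, hC₁, C₂, hC₂, H⟩ := stmt14_general hb.contDiff_one hσ.contDiff_one hσpos
    hσ.exists_abs_le (hb.exists_abs_bracket_le hσ) hφ hA
  exact ⟨C₁, hC₁, C₂, hC₂, fun g ⟨_, hg⟩ =>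
    H g (continuousOn_of_dist_le_mul_rpow (by linarith) hg)⟩
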